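/- arXiv:2503.18088 — 2 statements merged into one kernel-verified Lean document; each statement's English description precedes it below -/
import Mathlib

section
/- Let G(3) be the group with underlying set ℤ⁶ and multiplication (r₁,r₂,r₃,r₁₂,r₁₃,r₂₃)(s₁,s₂,s₃,s₁₂,s₁₃,s₂₃) = (r₁+s₁, r₂+s₂, r₃+s₃, r₁₂+s₁₂+r₁s₂, r₁₃+s₁₃+r₁s₃, r₂₃+s₂₃+r₂s₃), let θ be an irrational real number, and let σ(r,s) = exp(2πiθ(s₁₃r₂ + s₃(r₁r₂ − r₁₂) + s₁₃r₁ + ½s₃r₁(r₁−1) + r₃(s₁₃ + r₁s₃) + ½r₁s₃(s₃−1))). Then the center of the quotient group G(3)/Z(G(3),σ) coincides with the image of the center Z(G(3)) under the quotient map; that is, Z(G(3)/Z(G(3),σ)) = Z(G(3))/Z(G(3),σ). -/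
/-- The free 2-step nilpotent group on three generators, realized set-theoretically as
`ℤ⁶` with elements `(r₁, r₂, r₃, r₁₂, r₁₃, r₂₃)`. -/
@[ext] structure GThree : Type where
  a1 : ℤ
  a2 : ℤ
  a3 : ℤ
  a12 : ℤ
  a13 : ℤ
  a23 : ℤ

namespace GThree

instance : Mul GThree :=
  ⟨fun r s =>
    ⟨r.a1 + s.a1, r.a2 + s.a2, r.a3 + s.a3, r.a12 + s.a12 + r.a1 * s.a2,
      r.a13 + s.a13 + r.a1 * s.a3, r.a23 + s.a23 + r.a2 * s.a3⟩⟩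

instance : One GThree := ⟨⟨0, 0, 0, 0, 0, 0⟩⟩

instance : Inv GThree :=
  ⟨fun r =>
    ⟨-r.a1, -r.a2, -r.a3, -r.a12 + r.a1 * r.a2, -r.a13 + r.a1 * r.a3,
      -r.a23 + r.a2 * r.a3⟩⟩

@[simp] lemma mul_def (r s : GThree) :
    r * s =
      ⟨r.a1 + s.a1, r.a2 + s.a2, r.a3 + s.a3, r.a12 + s.a12 + r.a1 * s.a2,
        r.a13 + s.a13 + r.a1 * s.a3, r.a23 + s.a23 + r.a2 * s.a3⟩ := rfl

@[simp] lemma one_def : (1 : GThree) = ⟨0, 0, 0, 0, 0, 0⟩ := rfl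

@[simp] lemma inv_def (r : GThree) :
    r⁻¹ =
      ⟨-r.a1, -r.a2, -r.a3, -r.a12 + r.a1 * r.a2, -r.a13 + r.a1 * r.a3,
        -r.a23 + r.a2 * r.a3⟩ := rfl

instance : Group GThree :=
  Group.ofLeftAxioms
    (fun a b c => by ext <;> simp <;> ring)
    (fun a => by ext <;> simp)
    (fun a => by ext <;> simp <;> ring)

end GThree

/-- The 2-cocycle `σ` on `G(3)` associated to the parameter `θ`, given by
`σ(r,s) = exp(2πiθ(s₁₃r₂ + s₃(r₁r₂ − r₁₂) + s₁₃r₁ + ½s₃r₁(r₁−1)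
            + r₃(s₁₃ + r₁s₃) + ½r₁s₃(s₃−1)))`. -/
noncomputable def sigmaGThree (θ : ℝ) (r s : GThree) : Circle :=
  Circle.exp (2 * Real.pi * θ *
    ((s.a13 : ℝ) * (r.a2 : ℝ) + (s.a3 : ℝ) * ((r.a1 : ℝ) * (r.a2 : ℝ) - (r.a12 : ℝ)) +
      (s.a13 : ℝ) * (r.a1 : ℝ) + (1 / 2) * (s.a3 : ℝ) * (r.a1 : ℝ) * ((r.a1 : ℝ) - 1) +
      (r.a3 : ℝ) * ((s.a13 : ℝ) + (r.a1 : ℝ) * (s.a3 : ℝ)) +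
      (1 / 2) * (r.a1 : ℝ) * (s.a3 : ℝ) * ((s.a3 : ℝ) - 1)))

/-- The twisted center `Z(G,σ)`: all central elements `g` such that `σ(g,h) = σ(h,g)`
for every `h ∈ G`. -/
def twistedCenter {G : Type*} [Group G] (σ : G → G → Circle) : Set G :=
  {g | g ∈ Subgroup.center G ∧ ∀ h, σ g h = σ h g}

/-!
An element `g` is central modulo `N` exactly when `⁅g, h⁆ ∈ N` for all `h`. In `G(3)` such a
commutator has `(1,2)`- and `(1,3)`-coordinates `g₁h₂ - h₁g₂` and `g₁h₃ - h₁g₃`, and if these vanish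
for all `h` then already `g₁ = g₂ = g₃ = 0`, so `g` is central. It remains to see that both
coordinates vanish on the twisted center: for `z` central, `σ(z,h) = exp(2πiθ(-z₁₂h₃))` and
`σ(h,z) = exp(2πiθ z₁₃(h₁ + h₂ + h₃))`, and since `θ` is irrational these agree for all `h` only if
`z₁₂ = z₁₃ = 0`.
-/

open scoped commutatorElement

lemma map_mk'_center_eq_center_quotient_iff {G : Type*} [Group G] (N : Subgroup G) [N.Normal] :
    (Subgroup.center G).map (QuotientGroup.mk' N) = Subgroup.center (G ⧸ N) ↔
      Subgroup.upperCentralSeriesStep N ≤ Subgroup.center G ⊔ N := by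
  have center_le_step : Subgroup.center G ≤ Subgroup.upperCentralSeriesStep N := fun g hg h ↦ by
    simp [commutatorElement_eq_one_iff_mul_comm.2 (Subgroup.mem_center_iff.1 hg h).symm]
  have map_le_center :
      (Subgroup.center G).map (QuotientGroup.mk' N) ≤ Subgroup.center (G ⧸ N) := by
    rwa [Subgroup.map_le_iff_le_comap, ← Subgroup.upperCentralSeriesStep_eq_comap_center]
  rw [← map_le_center.ge_iff_eq,
    ← Subgroup.comap_le_comap_of_surjective (QuotientGroup.mk'_surjective N),
    ← Subgroup.upperCentralSeriesStep_eq_comap_center, Subgroup.comap_map_eq,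
    QuotientGroup.ker_mk']

lemma circleExp_two_pi_mul_intCast_injective {θ : ℝ} (hθ : Irrational θ) :
    Function.Injective fun m : ℤ ↦ Circle.exp (2 * Real.pi * θ * m) := by
  intro m n hmn
  obtain ⟨k, hk⟩ := Circle.exp_eq_exp.1 hmn
  have mul_sub_eq : θ * ((m - n : ℤ) : ℝ) = k := by
    apply mul_left_cancel₀ Real.two_pi_pos.ne'
    push_cast
    linear_combination hk
  by_contra hne
  exact (hθ.mul_intCast (sub_ne_zero.2 hne)).ne_int k mul_sub_eq

namespace GThree

lemma commutatorElement_eq (g h : GThree) :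
    ⁅g, h⁆ = ⟨0, 0, 0, g.a1 * h.a2 - h.a1 * g.a2, g.a1 * h.a3 - h.a1 * g.a3,
      g.a2 * h.a3 - h.a2 * g.a3⟩ := by
  ext <;> simp only [commutatorElement_def, mul_def, inv_def] <;> ring

lemma a1_a2_a3_eq_zero_of_forall_commutatorElement {g : GThree}
    (hg : ∀ h : GThree, ⁅g, h⁆.a12 = 0 ∧ ⁅g, h⁆.a13 = 0) : g.a1 = 0 ∧ g.a2 = 0 ∧ g.a3 = 0 := by
  have with_e₁ := hg ⟨1, 0, 0, 0, 0, 0⟩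
  have with_e₂ := hg ⟨0, 1, 0, 0, 0, 0⟩
  simp only [commutatorElement_eq] at with_e₁ with_e₂
  omega

lemma mem_center_iff {g : GThree} :
    g ∈ Subgroup.center GThree ↔ g.a1 = 0 ∧ g.a2 = 0 ∧ g.a3 = 0 := by
  constructor
  · intro hg
    refine a1_a2_a3_eq_zero_of_forall_commutatorElement fun h ↦ ?_
    simp [commutatorElement_eq_one_iff_mul_comm.2 (Subgroup.mem_center_iff.1 hg h).symm]
  · rintro ⟨h₁, h₂, h₃⟩
    refine Subgroup.mem_center_iff.2 fun h ↦ (commutatorElement_eq_one_iff_mul_comm.1 ?_).symm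
    simp [commutatorElement_eq, h₁, h₂, h₃]

lemma sigmaGThree_of_left_mem_center (θ : ℝ) {r : GThree} (hr : r ∈ Subgroup.center GThree)
    (s : GThree) :
    sigmaGThree θ r s = Circle.exp (2 * Real.pi * θ * (-(r.a12 * s.a3) : ℤ)) := by
  obtain ⟨h₁, h₂, h₃⟩ := mem_center_iff.1 hr
  simp only [sigmaGThree, h₁, h₂, h₃]
  push_cast
  ring_nf

lemma sigmaGThree_of_right_a3_eq_zero (θ : ℝ) (r : GThree) {s : GThree} (hs : s.a3 = 0) :
    sigmaGThree θ r s =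
      Circle.exp (2 * Real.pi * θ * (s.a13 * (r.a1 + r.a2 + r.a3) : ℤ)) := by
  simp only [sigmaGThree, hs]
  push_cast
  ring_nf

lemma mem_twistedCenter_sigmaGThree_iff {θ : ℝ} (hθ : Irrational θ) {g : GThree} :
    g ∈ twistedCenter (sigmaGThree θ) ↔
      g ∈ Subgroup.center GThree ∧ g.a12 = 0 ∧ g.a13 = 0 := by
  refine and_congr_right fun hg ↦ ?_
  have sigma_comm_iff (h : GThree) : sigmaGThree θ g h = sigmaGThree θ h g ↔
      -(g.a12 * h.a3) = g.a13 * (h.a1 + h.a2 + h.a3) := by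
    rw [sigmaGThree_of_left_mem_center θ hg,
      sigmaGThree_of_right_a3_eq_zero θ h (mem_center_iff.1 hg).2.2]
    exact (circleExp_two_pi_mul_intCast_injective hθ).eq_iff
  simp only [sigma_comm_iff]
  constructor
  · intro hcomm
    have with_e₁ := hcomm ⟨1, 0, 0, 0, 0, 0⟩
    have with_e₃ := hcomm ⟨0, 0, 1, 0, 0, 0⟩
    simp only at with_e₁ with_e₃
    omega
  · rintro ⟨h₁₂, h₁₃⟩ h
    simp [h₁₂, h₁₃]

end GThree

theorem center_quotient_GThree_general (N : Subgroup GThree) [N.Normal]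
    (hN : ∀ n ∈ N, n.a12 = 0 ∧ n.a13 = 0) :
    (Subgroup.center (GThree ⧸ N) : Set (GThree ⧸ N)) =
      QuotientGroup.mk '' (Subgroup.center GThree : Set GThree) := by
  have step_le_center : Subgroup.upperCentralSeriesStep N ≤ Subgroup.center GThree := fun g hg ↦
    GThree.mem_center_iff.2 <|
      GThree.a1_a2_a3_eq_zero_of_forall_commutatorElement fun h ↦ hN _ (hg h)
  rw [← (map_mk'_center_eq_center_quotient_iff N).2 (le_sup_of_le_left step_le_center),
    Subgroup.coe_map, QuotientGroup.coe_mk']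

/-- For an irrational `θ`, the center of the quotient group
`G(3)/Z(G(3),σ)` coincides with the image of the center `Z(G(3))` under the quotient
map. -/
theorem center_quotient_GThree (θ : ℝ) (hθ : Irrational θ)
    (N : Subgroup GThree) [N.Normal]
    (hN : (N : Set GThree) = twistedCenter (sigmaGThree θ)) :
    (Subgroup.center (GThree ⧸ N) : Set (GThree ⧸ N)) =
      QuotientGroup.mk '' (Subgroup.center GThree : Set GThree) :=
  center_quotient_GThree_general N fun _ hn ↦
    ((GThree.mem_twistedCenter_sigmaGThree_iff hθ).1 (hN.subset hn)).2
end

section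
/- Let Γ be the group with underlying set ℤ⁴ and multiplication (k₁,k₂,k₃,k₄)(l₁,l₂,l₃,l₄) = (k₁+l₁, k₂+l₂+k₄l₃, k₃+l₃, k₄+l₄), and for real α, β > 0 let σ_{α,β}(k,l) = exp(2πi(−αβk₁l₃ + β³k₄l₂ + β³k₄²l₃/2)). Then the twisted center Z(Γ,σ_{α,β}) is trivial if and only if both αβ and β³ are irrational. -/
/-- The group `Γ = ℤ × H₃(ℤ)` (`H₃(ℤ)` the integer Heisenberg group), realized
set-theoretically as `ℤ⁴` with multiplication
`(k₁,k₂,k₃,k₄)(l₁,l₂,l₃,l₄) = (k₁+l₁, k₂+l₂+k₄l₃, k₃+l₃, k₄+l₄)`. -/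
@[ext] structure Gam : Type where
  k1 : ℤ
  k2 : ℤ
  k3 : ℤ
  k4 : ℤ

namespace Gam

instance : Mul Gam :=
  ⟨fun x y => ⟨x.k1 + y.k1, x.k2 + y.k2 + x.k4 * y.k3, x.k3 + y.k3, x.k4 + y.k4⟩⟩

instance : One Gam := ⟨⟨0, 0, 0, 0⟩⟩

instance : Inv Gam :=
  ⟨fun x => ⟨-x.k1, -x.k2 + x.k4 * x.k3, -x.k3, -x.k4⟩⟩

@[simp] lemma mul_def (x y : Gam) :
    x * y = ⟨x.k1 + y.k1, x.k2 + y.k2 + x.k4 * y.k3, x.k3 + y.k3, x.k4 + y.k4⟩ := rfl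

@[simp] lemma one_def : (1 : Gam) = ⟨0, 0, 0, 0⟩ := rfl

@[simp] lemma inv_def (x : Gam) :
    x⁻¹ = ⟨-x.k1, -x.k2 + x.k4 * x.k3, -x.k3, -x.k4⟩ := rfl

instance : Group Gam :=
  Group.ofLeftAxioms
    (fun a b c => by ext <;> simp <;> ring)
    (fun a => by ext <;> simp)
    (fun a => by ext <;> simp <;> ring)

end Gam

/-- The 2-cocycle `σ_{α,β}` on `Γ` given by
`σ_{α,β}(k,l) = exp(2πi(−αβk₁l₃ + β³k₄l₂ + β³k₄²l₃/2))`. -/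
noncomputable def sigmaGam (α β : ℝ) (x y : Gam) : Circle :=
  Circle.exp (2 * Real.pi *
    (-(α * β) * (x.k1 : ℝ) * (y.k3 : ℝ) + β ^ 3 * (x.k4 : ℝ) * (y.k2 : ℝ) +
      β ^ 3 * (x.k4 : ℝ) ^ 2 * (y.k3 : ℝ) / 2))

/-!
The center of `Γ` is the set of `g = (k₁, k₂, 0, 0)`, and for such `g` the ratio
`σ(g, h) / σ(h, g)` is `exp (-2πi (αβ k₁ h₃ + β³ k₂ h₄))`. Testing against the generators in the
third and fourth coordinates, `g` lies in the twisted center if and only if `αβ k₁` and `β³ k₂`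
are integers. A real number is irrational exactly when none of its nonzero integer multiples
is an integer.
-/

theorem irrational_iff_forall_mul_intCast_mem_range {x : ℝ} :
    Irrational x ↔ ∀ n : ℤ, x * n ∈ (Int.castRingHom ℝ).range → n = 0 := by
  constructor
  · intro hx n ⟨m, hm⟩
    by_contra hn
    exact (hx.mul_intCast hn).ne_int m hm.symm
  · rintro h ⟨q, rfl⟩
    refine q.den_ne_zero (mod_cast h q.den ⟨q.num, ?_⟩)
    rw [eq_intCast]
    exact_mod_cast q.mul_den_eq_num.symm

theorem circle_exp_two_pi_mul_eq_iff {x y : ℝ} :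
    Circle.exp (2 * Real.pi * x) = Circle.exp (2 * Real.pi * y) ↔
      x - y ∈ (Int.castRingHom ℝ).range := by
  rw [Circle.exp_eq_exp, RingHom.mem_range]
  refine exists_congr fun m => ?_
  rw [eq_intCast, mul_comm (m : ℝ), ← mul_add, mul_right_inj' Real.two_pi_pos.ne',
    eq_sub_iff_add_eq', eq_comm]

theorem Gam.mem_center_iff {g : Gam} : g ∈ Subgroup.center Gam ↔ g.k3 = 0 ∧ g.k4 = 0 := by
  have commute_iff (h : Gam) : h * g = g * h ↔ h.k4 * g.k3 = g.k4 * h.k3 := by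
    simp only [Gam.ext_iff, Gam.mul_def]
    grind
  simp only [Subgroup.mem_center_iff, commute_iff]
  constructor
  · intro hg
    exact ⟨by simpa using hg ⟨0, 0, 0, 1⟩, by simpa using (hg ⟨0, 0, 1, 0⟩).symm⟩
  · rintro ⟨h3, h4⟩ h
    rw [h3, h4, mul_zero, zero_mul]

theorem sigmaGam_comm_iff_of_mem_center {α β : ℝ} {g : Gam} (hg : g ∈ Subgroup.center Gam)
    (h : Gam) :
    sigmaGam α β g h = sigmaGam α β h g ↔
      α * β * g.k1 * h.k3 + β ^ 3 * g.k2 * h.k4 ∈ (Int.castRingHom ℝ).range := by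
  obtain ⟨h3, h4⟩ := Gam.mem_center_iff.mp hg
  rw [sigmaGam, sigmaGam, circle_exp_two_pi_mul_eq_iff, ← neg_mem_iff, h3, h4]
  congr! 1
  push_cast
  ring

theorem mem_twistedCenter_sigmaGam_iff {α β : ℝ} {g : Gam} :
    g ∈ twistedCenter (sigmaGam α β) ↔
      g ∈ Subgroup.center Gam ∧ α * β * g.k1 ∈ (Int.castRingHom ℝ).range ∧
        β ^ 3 * g.k2 ∈ (Int.castRingHom ℝ).range := by
  refine and_congr_right fun hg => ?_
  simp only [sigmaGam_comm_iff_of_mem_center hg]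
  constructor
  · intro hint
    exact ⟨by simpa using hint ⟨0, 0, 1, 0⟩, by simpa using hint ⟨0, 0, 0, 1⟩⟩
  · rintro ⟨h1, h2⟩ h
    exact add_mem (mul_mem h1 ⟨h.k3, rfl⟩) (mul_mem h2 ⟨h.k4, rfl⟩)

/-- For `α, β > 0`, the twisted center `Z(Γ, σ_{α,β})` is trivial if
and only if both `αβ` and `β³` are irrational. -/
theorem twistedCenter_Gam_trivial_iff (α β : ℝ) (hα : 0 < α) (hβ : 0 < β) :
    twistedCenter (sigmaGam α β) = {1} ↔ Irrational (α * β) ∧ Irrational (β ^ 3) := by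
  simp only [irrational_iff_forall_mul_intCast_mem_range, Set.eq_singleton_iff_unique_mem,
    mem_twistedCenter_sigmaGam_iff]
  constructor
  · rintro ⟨-, eq_one⟩
    refine ⟨fun m hm => congrArg Gam.k1 (eq_one ⟨m, 0, 0, 0⟩ ?_),
      fun n hn => congrArg Gam.k2 (eq_one ⟨0, n, 0, 0⟩ ?_)⟩
    · exact ⟨Gam.mem_center_iff.mpr ⟨rfl, rfl⟩, hm, by simp⟩
    · exact ⟨Gam.mem_center_iff.mpr ⟨rfl, rfl⟩, by simp, hn⟩
  · rintro ⟨hαβ, hβ3⟩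
    refine ⟨⟨one_mem _, by simp, by simp⟩, ?_⟩
    rintro g ⟨hg, h1, h2⟩
    obtain ⟨h3, h4⟩ := Gam.mem_center_iff.mp hg
    exact Gam.ext (hαβ _ h1) (hβ3 _ h2) h3 h4
end
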